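/- arXiv:1209.3074 — 3 statements merged into one kernel-verified Lean document; each statement's English description precedes it below -/
import Mathlib

section
/- (Vanishing lemma) Let N ≥ 3 be an integer, set 2* = 2N/(N−2), and let R > 0 and M > 0. Let (u_n) be a sequence of compactly supported C¹ functions ℝ^N → ℝ satisfying ∫_{ℝ^N}(‖∇u_n‖² + u_n²) dx ≤ M for all n. If lim_{n→∞} sup_{x ∈ ℝ^N} ∫_{B(x,R)} |u_n(y)|^{2*} dy = 0, then lim_{n→∞} ∫_{ℝ^N} |u_n(x)|^{2*} dx = 0. -/
open MeasureTheory Real Filter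

/-!
Apply the Gagliardo–Nirenberg–Sobolev inequality, with `1/q = 1/p - 1/n` and hence
`p/n + p/q = 1`, to `w = φ(· - x) • u`, where the bump `φ` is supported in the ball of radius `R`:
`∫ ‖w‖^q = (∫ ‖w‖^q)^(p/n) (∫ ‖w‖^q)^(p/q) ≤ C S^(p/n) ∫ ‖Dw‖^p`, where `S` bounds the integral of
`‖u‖^q` over every ball of radius `R`. Instead of summing over a covering by balls with bounded
overlap, integrate over the centre `x`: by Tonelli both sides factor into an integral of `φ` times
an integral of `u`, so `∫ ‖u‖^q ≤ K S^(p/n) ∫ (‖Du‖^p + ‖u‖^p)`, which tends to zero with `S`.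
-/

open scoped ENNReal NNReal Topology
open Module (finrank)

lemma integrable_norm_rpow_of_hasCompactSupport {X V : Type*} [TopologicalSpace X]
    [MeasurableSpace X] [OpensMeasurableSpace X] [NormedAddCommGroup V] {μ : Measure X}
    [IsFiniteMeasureOnCompacts μ] {v : X → V} (hv : Continuous v) (hvc : HasCompactSupport v)
    {r : ℝ} (hr : 0 < r) : Integrable (fun x ↦ ‖v x‖ ^ r) μ :=
  (hv.norm.rpow_const fun _ ↦ Or.inr hr.le).integrable_of_hasCompactSupport
    (hvc.norm.rpow_const hr.ne')

lemma ofReal_norm_rpow {V : Type*} [NormedAddCommGroup V] (a : V) {r : ℝ} (hr : 0 ≤ r) :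
    ENNReal.ofReal (‖a‖ ^ r) = ‖a‖ₑ ^ r := by
  rw [← ENNReal.ofReal_rpow_of_nonneg (norm_nonneg a) hr, ofReal_norm]

lemma ofReal_integral_norm_rpow {X V : Type*} [MeasurableSpace X] [NormedAddCommGroup V]
    {μ : Measure X} {v : X → V} {r : ℝ} (hr : 0 ≤ r) (hv : Integrable (fun x ↦ ‖v x‖ ^ r) μ) :
    ENNReal.ofReal (∫ x, ‖v x‖ ^ r ∂μ) = ∫⁻ x, ‖v x‖ₑ ^ r ∂μ := by
  rw [ofReal_integral_eq_lintegral_ofReal hv (Eventually.of_forall fun x ↦ by positivity)]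
  simp only [ofReal_norm_rpow _ hr]

lemma lintegral_lintegral_sub_mul {G : Type*} [AddGroup G] [MeasurableSpace G]
    [MeasurableAdd₂ G] [MeasurableNeg G] {μ : Measure G} [SFinite μ] [μ.IsAddLeftInvariant]
    [μ.IsNegInvariant] {f g : G → ℝ≥0∞} (hf : Measurable f) (hg : Measurable g) :
    ∫⁻ x, ∫⁻ y, f (y - x) * g y ∂μ ∂μ = (∫⁻ x, f x ∂μ) * ∫⁻ y, g y ∂μ := by
  have integral_translate (y : G) : ∫⁻ x, f (y - x) * g y ∂μ = (∫⁻ x, f x ∂μ) * g y := by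
    rw [lintegral_mul_const _ (by fun_prop), lintegral_sub_left_eq_self]
  rw [lintegral_lintegral_swap (by fun_prop)]
  simp only [integral_translate]
  exact lintegral_const_mul _ hg

lemma div_add_div_eq_one {p q n : ℝ} (hp : p ≠ 0) (hpq : q⁻¹ = p⁻¹ - n⁻¹) :
    p / n + p / q = 1 := by
  rw [div_eq_mul_inv, div_eq_mul_inv, hpq, ← mul_add, add_sub_cancel, mul_inv_cancel₀ hp]

section Sobolev

variable {E F : Type*} [NormedAddCommGroup E] [NormedSpace ℝ E]
  [NormedAddCommGroup F] [NormedSpace ℝ F] {p q R : ℝ}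

/-- The energy density `‖Du‖ᵖ + ‖u‖ᵖ` of the Sobolev space `W^{1,p}`. Its values are extended
nonnegative reals, so that Tonelli's theorem applies to it without integrability conditions. -/
noncomputable def sobolevDensity (p : ℝ) (u : E → F) (x : E) : ℝ≥0∞ :=
  ‖fderiv ℝ u x‖ₑ ^ p + ‖u x‖ₑ ^ p

lemma sobolevDensity_comp_sub (u : E → F) (x y : E) :
    sobolevDensity p (fun z ↦ u (z - x)) y = sobolevDensity p u (y - x) := by
  simp only [sobolevDensity, fderiv_comp_sub]

lemma enorm_fderiv_smul_rpow_le (hp : 1 ≤ p) {φ : E → ℝ} {u : E → F} {x : E}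
    (hφ : DifferentiableAt ℝ φ x) (hu : DifferentiableAt ℝ u x) :
    ‖fderiv ℝ (fun y ↦ φ y • u y) x‖ₑ ^ p ≤
      2 ^ (p - 1) * (sobolevDensity p φ x * sobolevDensity p u x) := by
  have hp0 : 0 ≤ p := zero_le_one.trans hp
  have leibniz : ‖fderiv ℝ (fun y ↦ φ y • u y) x‖ₑ ≤
      ‖φ x‖ₑ * ‖fderiv ℝ u x‖ₑ + ‖fderiv ℝ φ x‖ₑ * ‖u x‖ₑ := by
    rw [fderiv_fun_smul hφ hu]
    refine (enorm_add_le (φ x • fderiv ℝ u x) ((fderiv ℝ φ x).smulRight (u x))).trans_eq ?_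
    rw [enorm_smul, ← ofReal_norm (ContinuousLinearMap.smulRight _ _),
      ContinuousLinearMap.norm_smulRight_apply, ENNReal.ofReal_mul (norm_nonneg _), ofReal_norm,
      ofReal_norm]
  calc ‖fderiv ℝ (fun y ↦ φ y • u y) x‖ₑ ^ p
      ≤ (‖φ x‖ₑ * ‖fderiv ℝ u x‖ₑ + ‖fderiv ℝ φ x‖ₑ * ‖u x‖ₑ) ^ p := by gcongr
    _ ≤ 2 ^ (p - 1) * (‖φ x‖ₑ ^ p * ‖fderiv ℝ u x‖ₑ ^ p + ‖fderiv ℝ φ x‖ₑ ^ p * ‖u x‖ₑ ^ p) := by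
      simp only [← ENNReal.mul_rpow_of_nonneg _ _ hp0]
      exact ENNReal.rpow_add_le_mul_rpow_add_rpow _ _ hp
    _ ≤ 2 ^ (p - 1) * (sobolevDensity p φ x * sobolevDensity p u x) := by
      rw [sobolevDensity, sobolevDensity, add_mul, mul_add, mul_add, add_comm]
      gcongr
      · exact le_add_self
      · exact le_self_add

variable [MeasurableSpace E] [BorelSpace E]

lemma measurable_sobolevDensity {u : E → F} (hu : ContDiff ℝ 1 u) :
    Measurable (sobolevDensity p u) :=
  ((hu.continuous_fderiv one_ne_zero).enorm.measurable.pow_const p).add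
    (hu.continuous.enorm.measurable.pow_const p)

lemma ofReal_integral_norm_fderiv_rpow_add {μ : Measure E} [IsFiniteMeasureOnCompacts μ]
    {u : E → F} (hu : ContDiff ℝ 1 u) (huc : HasCompactSupport u) (hp : 0 < p) :
    ENNReal.ofReal (∫ x, (‖fderiv ℝ u x‖ ^ p + ‖u x‖ ^ p) ∂μ) =
      ∫⁻ x, sobolevDensity p u x ∂μ := by
  have hDu := hu.continuous_fderiv one_ne_zero
  have int_Du := integrable_norm_rpow_of_hasCompactSupport (μ := μ) hDu (huc.fderiv ℝ) hp
  have int_u := integrable_norm_rpow_of_hasCompactSupport (μ := μ) hu.continuous huc hp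
  rw [integral_add int_Du int_u, ENNReal.ofReal_add (by positivity) (by positivity),
    ofReal_integral_norm_rpow hp.le int_Du, ofReal_integral_norm_rpow hp.le int_u]
  exact (lintegral_add_left (hDu.enorm.measurable.pow_const p) _).symm

lemma lintegral_enorm_bump_smul_rpow_le [HasContDiffBump E] (φ : ContDiffBump (0 : E))
    {u : E → F} (hq : 0 < q) (μ : Measure E) (x : E) :
    ∫⁻ y, ‖φ (y - x) • u y‖ₑ ^ q ∂μ ≤ ∫⁻ y in Metric.ball x φ.rOut, ‖u y‖ₑ ^ q ∂μ := by
  rw [← lintegral_indicator measurableSet_ball]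
  gcongr with y
  by_cases hy : y ∈ Metric.ball x φ.rOut
  · have bump_le_one : ‖φ (y - x)‖ₑ ≤ 1 := by
      rw [Real.enorm_of_nonneg φ.nonneg]
      exact ENNReal.ofReal_le_one.2 φ.le_one
    rw [Set.indicator_of_mem hy, enorm_smul]
    gcongr
    exact mul_le_of_le_one_left' bump_le_one
  · have bump_eq_zero : φ (y - x) = 0 :=
      φ.zero_of_le_dist (by simpa [dist_eq_norm] using hy)
    simp [bump_eq_zero, hq]

variable [FiniteDimensional ℝ E] (μ : Measure E) [μ.IsAddHaarMeasure]

lemma lintegral_enorm_bump_rpow_pos (φ : ContDiffBump (0 : E)) (hq : 0 < q) :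
    0 < ∫⁻ x, ‖φ x‖ₑ ^ q ∂μ := by
  rw [lintegral_pos_iff_support (φ.continuous.enorm.measurable.pow_const q)]
  have support_eq : (Function.support fun x ↦ ‖φ x‖ₑ ^ q) = Metric.ball 0 φ.rOut := by
    rw [← φ.support_eq]
    ext x
    simp [hq, hq.not_gt]
  rw [support_eq]
  exact Metric.measure_ball_pos μ 0 φ.rOut_pos

variable [FiniteDimensional ℝ F]

lemma lintegral_enorm_rpow_rpow_le_lintegral_fderiv {w : E → F} (hw : ContDiff ℝ 1 w)
    (hwc : HasCompactSupport w) (hp : 1 ≤ p) (hn : 0 < finrank ℝ E) (hq : 0 < q)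
    (hpq : q⁻¹ = p⁻¹ - (finrank ℝ E : ℝ)⁻¹) :
    (∫⁻ x, ‖w x‖ₑ ^ q ∂μ) ^ (p / q) ≤
      (SNormLESNormFDerivOfEqConst F μ p : ℝ≥0∞) ^ p * ∫⁻ x, ‖fderiv ℝ w x‖ₑ ^ p ∂μ := by
  have hp0 : 0 < p := zero_lt_one.trans_le hp
  lift p to ℝ≥0 using hp0.le
  lift q to ℝ≥0 using hq.le
  have sobolev := eLpNorm_le_eLpNorm_fderiv_of_eq μ hw hwc (mod_cast hp) hn hpq
  rw [eLpNorm_nnreal_eq_lintegral (by exact_mod_cast hq.ne'),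
    eLpNorm_nnreal_eq_lintegral (by exact_mod_cast hp0.ne')] at sobolev
  have sobolev_rpow := ENNReal.rpow_le_rpow sobolev hp0.le
  rwa [ENNReal.mul_rpow_of_nonneg _ _ hp0.le, ← ENNReal.rpow_mul, ← ENNReal.rpow_mul,
    one_div_mul_cancel hp0.ne', ENNReal.rpow_one, one_div_mul_eq_div] at sobolev_rpow

lemma lintegral_enorm_rpow_le_rpow_mul_lintegral_fderiv {w : E → F} (hw : ContDiff ℝ 1 w)
    (hwc : HasCompactSupport w) (hp : 1 ≤ p) (hn : 0 < finrank ℝ E) (hq : 0 < q)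
    (hpq : q⁻¹ = p⁻¹ - (finrank ℝ E : ℝ)⁻¹) {S : ℝ≥0∞} (hS : ∫⁻ x, ‖w x‖ₑ ^ q ∂μ ≤ S) :
    ∫⁻ x, ‖w x‖ₑ ^ q ∂μ ≤ (SNormLESNormFDerivOfEqConst F μ p : ℝ≥0∞) ^ p * S ^ (p / finrank ℝ E) *
      ∫⁻ x, ‖fderiv ℝ w x‖ₑ ^ p ∂μ := by
  calc ∫⁻ x, ‖w x‖ₑ ^ q ∂μ
      = (∫⁻ x, ‖w x‖ₑ ^ q ∂μ) ^ (p / finrank ℝ E) * (∫⁻ x, ‖w x‖ₑ ^ q ∂μ) ^ (p / q) := by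
        rw [← ENNReal.rpow_add_of_nonneg _ _ (by positivity) (by positivity),
          div_add_div_eq_one (zero_lt_one.trans_le hp).ne' hpq, ENNReal.rpow_one]
    _ ≤ S ^ (p / finrank ℝ E) * ((SNormLESNormFDerivOfEqConst F μ p : ℝ≥0∞) ^ p *
          ∫⁻ x, ‖fderiv ℝ w x‖ₑ ^ p ∂μ) := by
        gcongr
        exact lintegral_enorm_rpow_rpow_le_lintegral_fderiv μ hw hwc hp hn hq hpq
    _ = _ := by ring

lemma lintegral_enorm_smul_translate_rpow_le {φ : E → ℝ} {u : E → F} (hφ : ContDiff ℝ 1 φ)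
    (hu : ContDiff ℝ 1 u) (huc : HasCompactSupport u) (hp : 1 ≤ p) (hn : 0 < finrank ℝ E)
    (hq : 0 < q) (hpq : q⁻¹ = p⁻¹ - (finrank ℝ E : ℝ)⁻¹) {S : ℝ≥0∞} {x : E}
    (hS : ∫⁻ y, ‖φ (y - x) • u y‖ₑ ^ q ∂μ ≤ S) :
    ∫⁻ y, ‖φ (y - x) • u y‖ₑ ^ q ∂μ ≤
      (SNormLESNormFDerivOfEqConst F μ p : ℝ≥0∞) ^ p * S ^ (p / finrank ℝ E) *
        (2 ^ (p - 1) * ∫⁻ y, sobolevDensity p φ (y - x) * sobolevDensity p u y ∂μ) := by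
  have hφx : ContDiff ℝ 1 fun y ↦ φ (y - x) := hφ.comp (contDiff_id.sub contDiff_const)
  refine (lintegral_enorm_rpow_le_rpow_mul_lintegral_fderiv μ (hφx.smul hu) huc.smul_left
    hp hn hq hpq hS).trans ?_
  rw [← lintegral_const_mul' (2 ^ (p - 1)) _ (by finiteness)]
  gcongr with y
  rw [← sobolevDensity_comp_sub]
  exact enorm_fderiv_smul_rpow_le hp (hφx.differentiable one_ne_zero y)
    (hu.differentiable one_ne_zero y)

lemma lintegral_enorm_rpow_mul_le {φ : E → ℝ} {u : E → F} (hφ : ContDiff ℝ 1 φ)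
    (hu : ContDiff ℝ 1 u) (huc : HasCompactSupport u) (hp : 1 ≤ p) (hn : 0 < finrank ℝ E)
    (hq : 0 < q) (hpq : q⁻¹ = p⁻¹ - (finrank ℝ E : ℝ)⁻¹) {S : ℝ≥0∞}
    (hS : ∀ x, ∫⁻ y, ‖φ (y - x) • u y‖ₑ ^ q ∂μ ≤ S) :
    (∫⁻ x, ‖φ x‖ₑ ^ q ∂μ) * ∫⁻ x, ‖u x‖ₑ ^ q ∂μ ≤
      (SNormLESNormFDerivOfEqConst F μ p : ℝ≥0∞) ^ p * S ^ (p / finrank ℝ E) *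
        (2 ^ (p - 1) * ((∫⁻ x, sobolevDensity p φ x ∂μ) * ∫⁻ x, sobolevDensity p u x ∂μ)) := by
  have measurable_φ : Measurable (sobolevDensity p φ) := measurable_sobolevDensity hφ
  have measurable_u : Measurable (sobolevDensity p u) := measurable_sobolevDensity hu
  rw [← lintegral_lintegral_sub_mul measurable_φ measurable_u,
    ← lintegral_lintegral_sub_mul (hφ.continuous.enorm.measurable.pow_const q)
      (hu.continuous.enorm.measurable.pow_const q),
    ← lintegral_const_mul' _ _ (by finiteness),
    ← lintegral_const_mul _ (by fun_prop)]
  gcongr with x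
  simpa only [enorm_smul, ENNReal.mul_rpow_of_nonneg _ _ hq.le] using
    lintegral_enorm_smul_translate_rpow_le μ hφ hu huc hp hn hq hpq (hS x)

lemma exists_lintegral_enorm_rpow_le (hp : 1 ≤ p) (hn : 0 < finrank ℝ E) (hq : 0 < q)
    (hpq : q⁻¹ = p⁻¹ - (finrank ℝ E : ℝ)⁻¹) (hR : 0 < R) :
    ∃ K : ℝ≥0, ∀ u : E → F, ContDiff ℝ 1 u → HasCompactSupport u →
      ∫⁻ x, ‖u x‖ₑ ^ q ∂μ ≤
        K * (⨆ x, ∫⁻ y in Metric.ball x R, ‖u y‖ₑ ^ q ∂μ) ^ (p / finrank ℝ E) *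
          ∫⁻ x, sobolevDensity p u x ∂μ := by
  let φ : ContDiffBump (0 : E) := ⟨R / 2, R, half_pos hR, half_lt_self hR⟩
  have hφ : ContDiff ℝ 1 φ := φ.contDiff
  set A := ∫⁻ x, ‖φ x‖ₑ ^ q ∂μ with hA
  set B := ∫⁻ x, sobolevDensity p φ x ∂μ with hB
  set C : ℝ≥0∞ := (SNormLESNormFDerivOfEqConst F μ p : ℝ≥0∞) ^ p
  have A_ne_zero : A ≠ 0 := (lintegral_enorm_bump_rpow_pos μ φ hq).ne'
  have A_ne_top : A ≠ ∞ := by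
    rw [hA, ← ofReal_integral_norm_rpow hq.le
      (integrable_norm_rpow_of_hasCompactSupport φ.continuous φ.hasCompactSupport hq)]
    exact ENNReal.ofReal_ne_top
  have B_ne_top : B ≠ ∞ := by
    rw [hB, ← ofReal_integral_norm_fderiv_rpow_add hφ φ.hasCompactSupport
      (zero_lt_one.trans_le hp)]
    exact ENNReal.ofReal_ne_top
  have K_ne_top : A⁻¹ * (C * 2 ^ (p - 1) * B) ≠ ∞ := by finiteness
  refine ⟨(A⁻¹ * (C * 2 ^ (p - 1) * B)).toNNReal, fun u hu huc ↦ ?_⟩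
  rw [ENNReal.coe_toNNReal K_ne_top]
  set S := ⨆ x, ∫⁻ y in Metric.ball x R, ‖u y‖ₑ ^ q ∂μ
  have local_le_S (x : E) : ∫⁻ y, ‖φ (y - x) • u y‖ₑ ^ q ∂μ ≤ S :=
    (lintegral_enorm_bump_smul_rpow_le φ hq μ x).trans
      (le_iSup (fun x ↦ ∫⁻ y in Metric.ball x R, ‖u y‖ₑ ^ q ∂μ) x)
  calc ∫⁻ x, ‖u x‖ₑ ^ q ∂μ
      ≤ A⁻¹ * (C * S ^ (p / finrank ℝ E) *
          (2 ^ (p - 1) * (B * ∫⁻ x, sobolevDensity p u x ∂μ))) :=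
        (ENNReal.mul_le_iff_le_inv A_ne_zero A_ne_top).1
          (lintegral_enorm_rpow_mul_le μ hφ hu huc hp hn hq hpq local_le_S)
    _ = A⁻¹ * (C * 2 ^ (p - 1) * B) * S ^ (p / finrank ℝ E) *
          ∫⁻ x, sobolevDensity p u x ∂μ := by ring

lemma exists_integral_norm_rpow_le (hp : 1 ≤ p) (hn : 0 < finrank ℝ E) (hq : 0 < q)
    (hpq : q⁻¹ = p⁻¹ - (finrank ℝ E : ℝ)⁻¹) (hR : 0 < R) :
    ∃ K : ℝ≥0, ∀ u : E → F, ContDiff ℝ 1 u → HasCompactSupport u →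
      ∫ x, ‖u x‖ ^ q ∂μ ≤
        K * (⨆ x, ∫ y in Metric.ball x R, ‖u y‖ ^ q ∂μ) ^ (p / finrank ℝ E) *
          ∫ x, (‖fderiv ℝ u x‖ ^ p + ‖u x‖ ^ p) ∂μ := by
  obtain ⟨K, hK⟩ := exists_lintegral_enorm_rpow_le (F := F) μ hp hn hq hpq hR
  refine ⟨K, fun u hu huc ↦ ?_⟩
  have int_u : Integrable (fun x ↦ ‖u x‖ ^ q) μ :=
    integrable_norm_rpow_of_hasCompactSupport hu.continuous huc hq
  set S := ⨆ x, ∫ y in Metric.ball x R, ‖u y‖ ^ q ∂μ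
  have S_nonneg : 0 ≤ S := Real.iSup_nonneg fun x ↦ by positivity
  have ball_le_S (x : E) : ∫ y in Metric.ball x R, ‖u y‖ ^ q ∂μ ≤ S := by
    refine le_ciSup (f := fun x ↦ ∫ y in Metric.ball x R, ‖u y‖ ^ q ∂μ)
      ⟨∫ y, ‖u y‖ ^ q ∂μ, ?_⟩ x
    rintro _ ⟨z, rfl⟩
    exact setIntegral_le_integral int_u (Eventually.of_forall fun y ↦ by positivity)
  have iSup_le_S : ⨆ x, ∫⁻ y in Metric.ball x R, ‖u y‖ₑ ^ q ∂μ ≤ ENNReal.ofReal S := by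
    refine iSup_le fun x ↦ ?_
    rw [← ofReal_integral_norm_rpow hq.le int_u.integrableOn]
    exact ENNReal.ofReal_le_ofReal (ball_le_S x)
  rw [← ENNReal.ofReal_le_ofReal_iff (by positivity), ofReal_integral_norm_rpow hq.le int_u,
    ENNReal.ofReal_mul (by positivity), ENNReal.ofReal_mul (by positivity),
    ofReal_integral_norm_fderiv_rpow_add hu huc (zero_lt_one.trans_le hp),
    ENNReal.ofReal_coe_nnreal, ← ENNReal.ofReal_rpow_of_nonneg S_nonneg (by positivity)]
  refine (hK u hu huc).trans ?_
  gcongr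

theorem vanishing_lemma_general {ι : Type*} {l : Filter ι} {M : ℝ} {u : ι → E → F} (hp : 1 ≤ p)
    (hn : 0 < finrank ℝ E) (hq : 0 < q) (hpq : q⁻¹ = p⁻¹ - (finrank ℝ E : ℝ)⁻¹) (hR : 0 < R)
    (hu : ∀ i, ContDiff ℝ 1 (u i)) (hsupp : ∀ i, HasCompactSupport (u i))
    (hbound : ∀ i, ∫ x, (‖fderiv ℝ (u i) x‖ ^ p + ‖u i x‖ ^ p) ∂μ ≤ M)
    (hvanish : Tendsto (fun i ↦ ⨆ x, ∫ y in Metric.ball x R, ‖u i y‖ ^ q ∂μ) l (𝓝 0)) :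
    Tendsto (fun i ↦ ∫ x, ‖u i x‖ ^ q ∂μ) l (𝓝 0) := by
  obtain ⟨K, hK⟩ := exists_integral_norm_rpow_le (F := F) μ hp hn hq hpq hR
  have exponent_pos : 0 < p / finrank ℝ E := by positivity
  have bound_tendsto :
      Tendsto (fun i ↦ K * (⨆ x, ∫ y in Metric.ball x R, ‖u i y‖ ^ q ∂μ) ^ (p / finrank ℝ E) * M)
        l (𝓝 0) := by
    simpa only [Real.zero_rpow exponent_pos.ne', mul_zero, zero_mul] using
      ((hvanish.rpow_const (Or.inr exponent_pos.le)).const_mul (K : ℝ)).mul_const M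
  refine squeeze_zero (fun i ↦ by positivity) (fun i ↦ (hK (u i) (hu i) (hsupp i)).trans ?_)
    bound_tendsto
  have iSup_nonneg : 0 ≤ ⨆ x, ∫ y in Metric.ball x R, ‖u i y‖ ^ q ∂μ :=
    Real.iSup_nonneg fun x ↦ by positivity
  gcongr
  exact hbound i

end Sobolev

lemma inv_two_mul_div_sub_two {n : ℝ} (hn : n ≠ 0) : (2 * n / (n - 2))⁻¹ = 2⁻¹ - n⁻¹ := by
  field_simp

theorem vanishing_lemma {N : ℕ} (hN : 3 ≤ N) (R M : ℝ) (hR : 0 < R) (hM : 0 < M)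
    (u : ℕ → EuclideanSpace ℝ (Fin N) → ℝ)
    (hu : ∀ n, ContDiff ℝ 1 (u n)) (hsupp : ∀ n, HasCompactSupport (u n))
    (hbound : ∀ n, ∫ x, (‖gradient (u n) x‖ ^ 2 + u n x ^ 2) ≤ M)
    (hvanish : Tendsto
      (fun n => ⨆ x : EuclideanSpace ℝ (Fin N),
        ∫ y in Metric.ball x R, |u n y| ^ (2 * (N : ℝ) / ((N : ℝ) - 2)))
      atTop (nhds 0)) :
    Tendsto (fun n => ∫ x, |u n x| ^ (2 * (N : ℝ) / ((N : ℝ) - 2)))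
      atTop (nhds 0) := by
  have two_lt_N : (2 : ℝ) < N := by exact_mod_cast hN
  have exponent_pos : 0 < 2 * (N : ℝ) / (N - 2) := div_pos (by linarith) (sub_pos.2 two_lt_N)
  have finrank_pos : 0 < finrank ℝ (EuclideanSpace ℝ (Fin N)) := by
    rw [finrank_euclideanSpace_fin]; omega
  have sobolev_exponent : (2 * (N : ℝ) / (N - 2))⁻¹ =
      2⁻¹ - (finrank ℝ (EuclideanSpace ℝ (Fin N)) : ℝ)⁻¹ := by
    rw [finrank_euclideanSpace_fin, inv_two_mul_div_sub_two (by linarith)]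
  have energy_bound (n : ℕ) : ∫ x, (‖fderiv ℝ (u n) x‖ ^ (2 : ℝ) + ‖u n x‖ ^ (2 : ℝ)) ≤ M := by
    simpa [gradient] using hbound n
  simp only [← Real.norm_eq_abs] at hvanish ⊢
  exact vanishing_lemma_general volume one_le_two finrank_pos exponent_pos
    sobolev_exponent hR hu hsupp energy_bound hvanish
end

section
/- Let N ≥ 1 be an integer and R > 0. Let u : ℝ^N → ℝ be a bounded C² function such that u(x) > 0 for all x ∈ ℝ^N, u(x) → 0 as ‖x‖ → ∞, and −Δu(x) + (1/2)·u(x) ≤ 0 for all x with ‖x‖ ≥ R. Then there exists a constant M > 0 such that u(x) ≤ M·exp(−‖x‖/2) for all x ∈ ℝ^N. -/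
open MeasureTheory Real Filter

/-- The Laplacian of `u` at `x`: the trace of the second derivative,
computed as the sum of pure second derivatives along the coordinate directions. -/
noncomputable def lap {N : ℕ} (u : EuclideanSpace ℝ (Fin N) → ℝ)
    (x : EuclideanSpace ℝ (Fin N)) : ℝ :=
  ∑ i, iteratedFDeriv ℝ 2 u x ![EuclideanSpace.single i 1, EuclideanSpace.single i 1]

/-!
Away from the origin the barrier `w x = exp (-c‖x‖)` satisfies
`Δ w = (c² - c (dim E - 1) / ‖x‖) w ≤ c² w`. If `Δ u ≥ c² u` outside a ball and `u ≤ M w` on that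
ball, then `Δ (u - M w) ≥ c² (u - M w) > 0` at every point where `u - M w` is positive. Since
`u ≤ ε` near infinity for every `ε > 0`, a positive value of `u - M w` would force a positive global
maximum, where the Laplacian is nonpositive.
-/

open InnerProductSpace Laplacian Module Topology

lemma deriv_deriv_nonpos_of_isLocalMax {f : ℝ → ℝ} {a : ℝ} (hmax : IsLocalMax f a)
    (hf : ContinuousAt f a) : deriv (deriv f) a ≤ 0 := by
  by_contra! hpos
  have hmin : IsLocalMin f a := isLocalMin_of_deriv_deriv_pos hpos hmax.deriv_eq_zero hf
  have hconst : f =ᶠ[𝓝 a] fun _ => f a := by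
    filter_upwards [hmax, hmin] with t hle hge using le_antisymm hle hge
  have hzero : deriv (deriv f) a = 0 := by simpa using hconst.deriv.deriv_eq
  exact hpos.ne' hzero

section NormedSpace

variable {E : Type*} [NormedAddCommGroup E] [NormedSpace ℝ E] {f : E → ℝ} {x : E}

lemma deriv_deriv_comp_add_smul (hf : ContDiffAt ℝ 2 f x) (v : E) :
    deriv (deriv fun t : ℝ => f (x + t • v)) 0 = iteratedFDeriv ℝ 2 f x ![v, v] := by
  have hline (t : ℝ) : HasDerivAt (fun t : ℝ => x + t • v) v t := by
    simpa using ((hasDerivAt_id t).smul_const v).const_add x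
  have htendsto : Tendsto (fun t : ℝ => x + t • v) (𝓝 0) (𝓝 x) :=
    Continuous.tendsto' (by fun_prop) _ _ (by simp)
  have hdiff : ∀ᶠ y in 𝓝 x, DifferentiableAt ℝ f y :=
    (hf.eventually (by simp)).mono fun y hy => hy.differentiableAt (by simp)
  have hfirst : (deriv fun t : ℝ => f (x + t • v)) =ᶠ[𝓝 0] fun t => fderiv ℝ f (x + t • v) v := by
    filter_upwards [htendsto.eventually hdiff] with t ht
    exact (ht.hasFDerivAt.comp_hasDerivAt t (hline t)).deriv
  have hsecond : HasFDerivAt (fderiv ℝ f) (fderiv ℝ (fderiv ℝ f) x) (x + (0 : ℝ) • v) := by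
    rw [zero_smul, add_zero]
    exact ((hf.fderiv_right (m := 1) (by norm_num)).differentiableAt (by simp)).hasFDerivAt
  have hcomp := hsecond.comp_hasDerivAt (0 : ℝ) (hline 0)
  have happly := hcomp.clm_apply (hasDerivAt_const (0 : ℝ) v)
  rw [hfirst.deriv_eq, iteratedFDeriv_two_apply]
  simpa using happly.deriv

lemma iteratedFDeriv_two_nonpos_of_isLocalMax (hmax : IsLocalMax f x) (hf : ContDiffAt ℝ 2 f x)
    (v : E) : iteratedFDeriv ℝ 2 f x ![v, v] ≤ 0 := by
  have hline : Tendsto (fun t : ℝ => x + t • v) (𝓝 0) (𝓝 x) :=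
    Continuous.tendsto' (by fun_prop) _ _ (by simp)
  rw [← deriv_deriv_comp_add_smul hf]
  refine deriv_deriv_nonpos_of_isLocalMax ?_ ?_
  · simpa [IsLocalMax, IsMaxFilter] using hline.eventually hmax
  · simpa [ContinuousAt, Function.comp_def] using hf.continuousAt.tendsto.comp hline

end NormedSpace

section InnerProductSpace

variable {E : Type*} [NormedAddCommGroup E] [InnerProductSpace ℝ E]

lemma hasFDerivAt_norm {x : E} (hx : x ≠ 0) :
    HasFDerivAt (fun y : E => ‖y‖) (‖x‖⁻¹ • innerSL ℝ x) x := by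
  have hsqrt := (hasStrictFDerivAt_norm_sq x).hasFDerivAt.sqrt (by simpa using hx)
  simp only [sqrt_sq (norm_nonneg _)] at hsqrt
  convert! hsqrt using 1
  ext v
  simp only [smul_apply, coe_innerSL_apply, smul_eq_mul, nsmul_eq_mul, Nat.cast_ofNat]
  field_simp

lemma contDiffAt_exp_neg_mul_norm {n : WithTop ℕ∞} (c : ℝ) {x : E} (hx : x ≠ 0) :
    ContDiffAt ℝ n (fun y : E => exp (-(c * ‖y‖))) x :=
  (contDiffAt_const.mul (contDiffAt_norm ℝ hx)).neg.exp

variable [FiniteDimensional ℝ E]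

lemma laplacian_nonpos_of_isLocalMax {f : E → ℝ} {x : E} (hmax : IsLocalMax f x)
    (hf : ContDiffAt ℝ 2 f x) : Δ f x ≤ 0 := by
  rw [laplacian_eq_iteratedFDeriv_stdOrthonormalBasis]
  exact Finset.sum_nonpos fun i _ => iteratedFDeriv_two_nonpos_of_isLocalMax hmax hf _

lemma nonpos_of_laplacian_pos {f : E → ℝ} {K : Set E} (hcont : Continuous f)
    (hinfty : ∀ ε > 0, ∀ᶠ x in cocompact E, f x ≤ ε) (hK : ∀ x ∈ K, f x ≤ 0)
    (hf : ∀ x ∉ K, ContDiffAt ℝ 2 f x) (hΔ : ∀ x ∉ K, 0 < f x → 0 < Δ f x) (x : E) :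
    f x ≤ 0 := by
  by_contra! hx
  obtain ⟨z, hz⟩ := hcont.exists_forall_ge' x (hinfty (f x) hx)
  have hfz : 0 < f z := hx.trans_le (hz x)
  have hzK : z ∉ K := fun hmem => (hK z hmem).not_gt hfz
  exact (laplacian_nonpos_of_isLocalMax (.of_forall hz) (hf z hzK)).not_gt (hΔ z hzK hfz)

lemma laplacian_comp_norm {φ φ' : ℝ → ℝ} {φ'' : ℝ} {x : E} (hx : x ≠ 0)
    (hφ : ∀ᶠ r in 𝓝 ‖x‖, HasDerivAt φ (φ' r) r) (hφ' : HasDerivAt φ' φ'' ‖x‖) :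
    Δ (fun y : E => φ ‖y‖) x = φ'' + (finrank ℝ E - 1) / ‖x‖ * φ' ‖x‖ := by
  have hr : ‖x‖ ≠ 0 := norm_ne_zero_iff.2 hx
  have hgrad : fderiv ℝ (fun y : E => φ ‖y‖) =ᶠ[𝓝 x] fun y => (φ' ‖y‖ / ‖y‖) • innerSL ℝ y := by
    filter_upwards [continuous_norm.continuousAt.eventually hφ, eventually_ne_nhds hx] with y hy hy0
    have hchain := hy.comp_hasFDerivAt y (hasFDerivAt_norm hy0)
    rw [smul_smul, ← div_eq_mul_inv] at hchain
    exact hchain.fderiv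
  have hcoeff := (hφ'.div (hasDerivAt_id ‖x‖) hr).comp_hasFDerivAt x (hasFDerivAt_norm hx)
  have hhess := hcoeff.smul (innerSL ℝ (E := E)).hasFDerivAt
  have hsecond (v : E) : iteratedFDeriv ℝ 2 (fun y : E => φ ‖y‖) x ![v, v] =
      (φ'' / ‖x‖ ^ 2 - φ' ‖x‖ / ‖x‖ ^ 3) * inner ℝ x v ^ 2 + φ' ‖x‖ / ‖x‖ * ‖v‖ ^ 2 := by
    rw [iteratedFDeriv_two_apply, hgrad.fderiv_eq]
    refine (DFunLike.congr_fun (DFunLike.congr_fun hhess.fderiv v) v).trans ?_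
    change φ' ‖x‖ / ‖x‖ * inner ℝ v v +
      (φ'' * ‖x‖ - φ' ‖x‖ * 1) / ‖x‖ ^ 2 * (‖x‖⁻¹ * inner ℝ x v) * inner ℝ x v = _
    rw [real_inner_self_eq_norm_sq]
    field_simp
    ring
  rw [laplacian_eq_iteratedFDeriv_stdOrthonormalBasis]
  simp only [hsecond, OrthonormalBasis.norm_eq_one, Finset.sum_add_distrib, ← Finset.mul_sum,
    OrthonormalBasis.sum_sq_inner_left, Finset.sum_const, Finset.card_univ, Fintype.card_fin,
    one_pow, nsmul_eq_mul, mul_one]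
  field_simp
  ring

lemma laplacian_exp_neg_mul_norm (c : ℝ) {x : E} (hx : x ≠ 0) :
    Δ (fun y : E => exp (-(c * ‖y‖))) x =
      (c ^ 2 - c * (finrank ℝ E - 1) / ‖x‖) * exp (-(c * ‖x‖)) := by
  have hexp (r : ℝ) : HasDerivAt (fun r => exp (-(c * r))) (-c * exp (-(c * r))) r := by
    simpa [mul_comm] using ((hasDerivAt_id r).const_mul c).neg.exp
  rw [laplacian_comp_norm hx (.of_forall hexp) ((hexp _).const_mul (-c))]
  ring

lemma laplacian_exp_neg_mul_norm_le [Nontrivial E] {c : ℝ} (hc : 0 ≤ c) {x : E} (hx : x ≠ 0) :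
    Δ (fun y : E => exp (-(c * ‖y‖))) x ≤ c ^ 2 * exp (-(c * ‖x‖)) := by
  have hdim : (1 : ℝ) ≤ finrank ℝ E := by exact_mod_cast finrank_pos (R := ℝ) (M := E)
  rw [laplacian_exp_neg_mul_norm c hx]
  gcongr
  exact sub_le_self _ (div_nonneg (mul_nonneg hc (sub_nonneg.2 hdim)) (norm_nonneg x))

lemma le_mul_exp_neg_mul_norm [Nontrivial E] {c M : ℝ} (hc : 0 < c) (hM : 0 ≤ M) {u : E → ℝ}
    {K : Set E} (hK0 : 0 ∈ K) (hu : Continuous u)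
    (hinfty : ∀ ε > 0, ∀ᶠ x in cocompact E, u x ≤ ε)
    (hK : ∀ x ∈ K, u x ≤ M * exp (-(c * ‖x‖))) (hdiff : ∀ x ∉ K, ContDiffAt ℝ 2 u x)
    (hsub : ∀ x ∉ K, c ^ 2 * u x ≤ Δ u x) (x : E) : u x ≤ M * exp (-(c * ‖x‖)) := by
  set w : E → ℝ := fun y => exp (-(c * ‖y‖))
  have hwdiff {y : E} (hy : y ∉ K) : ContDiffAt ℝ 2 (M • w) y :=
    (contDiffAt_exp_neg_mul_norm c (ne_of_mem_of_not_mem hK0 hy).symm).const_smul M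
  suffices hle : (u - M • w) x ≤ 0 from sub_nonpos.1 hle
  refine nonpos_of_laplacian_pos (K := K) (by fun_prop) ?_ (fun y hy => sub_nonpos.2 (hK y hy))
    (fun y hy => (hdiff y hy).sub (hwdiff hy)) ?_ x
  · intro ε hε
    filter_upwards [hinfty ε hε] with y hy
    exact (sub_le_self _ (mul_nonneg hM (exp_pos _).le)).trans hy
  · intro y hy hpos
    have hy0 : y ≠ 0 := (ne_of_mem_of_not_mem hK0 hy).symm
    have hΔw : Δ w y ≤ c ^ 2 * w y := laplacian_exp_neg_mul_norm_le hc.le hy0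
    calc 0 < c ^ 2 * (u y - M * w y) := mul_pos (pow_pos hc 2) hpos
      _ = c ^ 2 * u y - M * (c ^ 2 * w y) := by ring
      _ ≤ Δ u y - M * Δ w y := by gcongr; exact hsub y hy
      _ = Δ (u - M • w) y := by
        rw [(hdiff y hy).laplacian_sub (hwdiff hy),
          laplacian_smul M (contDiffAt_exp_neg_mul_norm c hy0), smul_eq_mul]

theorem exponential_decay_comparison_general [Nontrivial E] {c : ℝ} (hc : 0 < c) {u : E → ℝ}
    (hu : Continuous u) (hinfty : ∀ ε > 0, ∀ᶠ x in cocompact E, u x ≤ ε)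
    (hdiff : ∀ᶠ x in cocompact E, ContDiffAt ℝ 2 u x)
    (hsub : ∀ᶠ x in cocompact E, c ^ 2 * u x ≤ Δ u x) :
    ∃ M > 0, ∀ x, u x ≤ M * exp (-(c * ‖x‖)) := by
  obtain ⟨K, hK, hKout⟩ := mem_cocompact.1 (hdiff.and hsub)
  have hcont : Continuous fun x => u x * exp (c * ‖x‖) := by fun_prop
  obtain ⟨B, hB⟩ := (hK.insert 0).exists_bound_of_continuousOn hcont.continuousOn
  refine ⟨max B 1, by positivity, le_mul_exp_neg_mul_norm hc (by positivity)
    (Set.mem_insert 0 K) hu hinfty (fun x hx => ?_) (fun x hx => ?_) (fun x hx => ?_)⟩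
  · rw [exp_neg, ← div_eq_mul_inv, le_div_iff₀ (exp_pos _)]
    exact (le_abs_self _).trans ((hB x hx).trans (le_max_left B 1))
  · exact (hKout fun hmem => hx (Set.mem_insert_of_mem 0 hmem)).1
  · exact (hKout fun hmem => hx (Set.mem_insert_of_mem 0 hmem)).2

end InnerProductSpace

lemma laplacian_eq_lap {N : ℕ} (u : EuclideanSpace ℝ (Fin N) → ℝ) : Δ u = lap u := by
  ext x
  simp [laplacian_eq_iteratedFDeriv_orthonormalBasis u (EuclideanSpace.basisFun (Fin N) ℝ), lap]

theorem exponential_decay_comparison {N : ℕ} (hN : 1 ≤ N) (R : ℝ) (hR : 0 < R)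
    (u : EuclideanSpace ℝ (Fin N) → ℝ) (hu : ContDiff ℝ 2 u)
    (hbdd : ∃ B : ℝ, ∀ x, |u x| ≤ B)
    (hpos : ∀ x, 0 < u x)
    (hlim : Tendsto u (cocompact (EuclideanSpace ℝ (Fin N))) (nhds 0))
    (hsub : ∀ x, R ≤ ‖x‖ → -lap u x + (1 / 2) * u x ≤ 0) :
    ∃ M > (0 : ℝ), ∀ x, u x ≤ M * Real.exp (-‖x‖ / 2) := by
  have : Nonempty (Fin N) := Fin.pos_iff_nonempty.1 hN
  have hΔ : ∀ᶠ x in cocompact _, (2⁻¹ : ℝ) ^ 2 * u x ≤ Δ u x := by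
    filter_upwards [tendsto_norm_cocompact_atTop.eventually_ge_atTop R] with x hx
    rw [laplacian_eq_lap]
    linarith [hsub x hx, hpos x]
  simpa [neg_div, div_eq_inv_mul] using exponential_decay_comparison_general (by norm_num)
    hu.continuous (fun _ => hlim.eventually_le_const) (.of_forall fun _ => hu.contDiffAt) hΔ
end

section
/- Let N ≥ 3 be an integer, set 2* = 2N/(N−2), and let S = inf{ (∫_{ℝ^N} ‖∇φ‖² dx) / (∫_{ℝ^N} |φ|^{2*} dx)^{2/2*} : φ ∈ C_c^∞(ℝ^N), φ not identically zero } be the best Sobolev constant. Suppose v : ℝ^N → ℝ is a C² function, not identically zero, satisfying −Δv(x) = |v(x)|^{2*−2}·v(x) for all x ∈ ℝ^N, and suppose there exists C > 0 such that |v(x)| ≤ C·(1+‖x‖)^{−(N−2)} and ‖∇v(x)‖ ≤ C·(1+‖x‖)^{−(N−1)} for all x. Then ∫_{ℝ^N} ‖∇v‖² dx ≥ S^{N/2}. -/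
open MeasureTheory Real

/-- The best Sobolev constant in dimension `N`. -/
noncomputable def sobolevConst (N : ℕ) : ℝ :=
  sInf { r : ℝ | ∃ φ : EuclideanSpace ℝ (Fin N) → ℝ,
    ContDiff ℝ (⊤ : ℕ∞) φ ∧ HasCompactSupport φ ∧ φ ≠ 0 ∧
    r = (∫ x, ‖gradient φ x‖ ^ 2) /
      (∫ x, |φ x| ^ (2 * (N : ℝ) / ((N : ℝ) - 2)))
        ^ (2 / (2 * (N : ℝ) / ((N : ℝ) - 2))) }

/-! Testing `-Δv = |v|^(2*-2) v` against `χ_R² v`, where `χ_R` is a cutoff at scale `R`, gives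
`∫ ‖∇(χ_R v)‖² = ∫ χ_R² |v|^2* + ∫ v² ‖∇χ_R‖²`. The last integral lives on `‖x‖ ≥ R`; since the
`L^N` norm of `∇χ_R` does not depend on `R`, Hölder's inequality bounds it by a tail of `∫ |v|^2*`,
so it vanishes as `R → ∞`. Applying Sobolev's inequality to `χ_R v` and passing to the limit,
`B = ∫ |v|^2*` satisfies `S B^(2/2*) ≤ B`, that is `S^(N/2) ≤ B`, while `B ≤ ∫ ‖∇v‖²`. -/

open Filter Topology InnerProductSpace Metric Function
open scoped Convolution Gradient Laplacian ContDiff Pointwise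

section Gradient

variable {E : Type*} [NormedAddCommGroup E] [InnerProductSpace ℝ E] [CompleteSpace E]
  {f g : E → ℝ} {x : E}

lemma norm_gradient (f : E → ℝ) (x : E) : ‖∇ f x‖ = ‖fderiv ℝ f x‖ :=
  (toDual ℝ E).symm.norm_map _

lemma continuous_gradient (hf : ContDiff ℝ 1 f) : Continuous (∇ f) :=
  (toDual ℝ E).symm.continuous.comp (hf.continuous_fderiv one_ne_zero)

lemma hasCompactSupport_gradient (hf : HasCompactSupport f) : HasCompactSupport (∇ f) :=
  (hf.fderiv ℝ).comp_left (map_zero (toDual ℝ E).symm)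

lemma gradient_mul (hf : DifferentiableAt ℝ f x) (hg : DifferentiableAt ℝ g x) :
    ∇ (fun y ↦ f y * g y) x = f x • ∇ g x + g x • ∇ f x := by
  simp [gradient, fderiv_fun_mul hf hg]

lemma gradient_comp_smul (f : E → ℝ) (c : ℝ) (x : E) :
    ∇ (fun y ↦ f (c • y)) x = c • ∇ f (c • x) := by
  simp [gradient, fderiv_comp_smul]

lemma norm_gradient_mul_sq (hf : DifferentiableAt ℝ f x) (hg : DifferentiableAt ℝ g x) :
    ‖∇ (fun y ↦ f y * g y) x‖ ^ 2 =
      inner ℝ (∇ g x) (∇ (fun y ↦ f y * (f y * g y)) x) + g x ^ 2 * ‖∇ f x‖ ^ 2 := by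
  rw [gradient_mul hf (hf.fun_mul hg), gradient_mul hf hg, norm_add_sq_real]
  simp only [norm_smul, mul_pow, norm_eq_abs, sq_abs, inner_add_right, inner_smul_right,
    inner_smul_left, real_inner_self_eq_norm_sq, RCLike.conj_to_real]
  ring

end Gradient

section Mollification

variable {E F : Type*} [NormedAddCommGroup E] [NormedSpace ℝ E] [FiniteDimensional ℝ E]
  [MeasurableSpace E] [BorelSpace E] {μ : Measure E} [μ.IsAddHaarMeasure]
  [NormedAddCommGroup F] [NormedSpace ℝ F]

lemma contDiff_normed_convolution (φ : ContDiffBump (0 : E)) {g : E → F} (hg : Continuous g) :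
    ContDiff ℝ ∞ (φ.normed μ ⋆[.lsmul ℝ ℝ, μ] g) :=
  φ.hasCompactSupport_normed.contDiff_convolution_left _ φ.contDiff_normed hg.locallyIntegrable

lemma fderiv_normed_convolution (φ : ContDiffBump (0 : E)) {g : E → F} (hg : ContDiff ℝ 1 g)
    (hgc : HasCompactSupport g) :
    fderiv ℝ (φ.normed μ ⋆[.lsmul ℝ ℝ, μ] g) = φ.normed μ ⋆[.lsmul ℝ ℝ, μ] fderiv ℝ g :=
  funext fun x ↦ (hgc.hasFDerivAt_convolution_right (.lsmul ℝ ℝ)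
    φ.integrable_normed.locallyIntegrable hg x).fderiv

variable [CompleteSpace F] {ι : Type*} {l : Filter ι} {φ : ι → ContDiffBump (0 : E)}

lemma eventually_dist_normed_convolution_le (hφ : Tendsto (fun i ↦ (φ i).rOut) l (𝓝 0))
    {g : E → F} (hg : UniformContinuous g) {ε : ℝ} (hε : 0 < ε) :
    ∀ᶠ i in l, ∀ x, dist (((φ i).normed μ ⋆[.lsmul ℝ ℝ, μ] g) x) (g x) ≤ ε := by
  obtain ⟨δ, hδ, hgδ⟩ := Metric.uniformContinuous_iff.1 hg ε hε
  filter_upwards [hφ.eventually_lt_const hδ] with i hi x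
  exact (φ i).dist_normed_convolution_le hg.continuous.aestronglyMeasurable
    fun y hy ↦ (hgδ ((mem_ball.1 hy).trans hi)).le

lemma tendsto_integral_norm_normed_convolution_rpow [l.IsCountablyGenerated]
    (hφ : Tendsto (fun i ↦ (φ i).rOut) l (𝓝 0)) {g : E → F} (hg : Continuous g)
    (hgc : HasCompactSupport g) {q : ℝ} (hq : 0 < q) :
    Tendsto (fun i ↦ ∫ x, ‖((φ i).normed μ ⋆[.lsmul ℝ ℝ, μ] g) x‖ ^ q ∂μ) l
      (𝓝 (∫ x, ‖g x‖ ^ q ∂μ)) := by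
  obtain ⟨M, hM⟩ := hg.bounded_above_of_compact_support hgc
  have hK : IsCompact (closedBall (0 : E) 1 + tsupport g) := (isCompact_closedBall 0 1).add hgc
  refine tendsto_integral_filter_of_dominated_convergence
    ((closedBall 0 1 + tsupport g).indicator fun _ ↦ (M + 1) ^ q) (.of_forall fun i ↦ ?_) ?_
    ((integrable_indicator_iff hK.measurableSet).2 (integrableOn_const hK.measure_lt_top.ne))
    (.of_forall fun x ↦ ?_)
  · exact ((contDiff_normed_convolution _ hg).continuous.norm.rpow_const
      fun _ ↦ .inr hq.le).aestronglyMeasurable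
  · filter_upwards [hφ.eventually_lt_const one_pos, eventually_dist_normed_convolution_le (μ := μ)
      hφ (hgc.uniformContinuous_of_continuous hg) one_pos] with i hi hdist
    refine .of_forall fun x ↦ ?_
    rw [norm_of_nonneg (by positivity)]
    by_cases hx : x ∈ closedBall 0 1 + tsupport g
    · rw [Set.indicator_of_mem hx]
      gcongr
      calc ‖((φ i).normed μ ⋆[.lsmul ℝ ℝ, μ] g) x‖
          ≤ ‖g x‖ + dist (((φ i).normed μ ⋆[.lsmul ℝ ℝ, μ] g) x) (g x) := by
            rw [dist_eq_norm]; exact norm_le_norm_add_norm_sub' _ _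
        _ ≤ M + 1 := add_le_add (hM x) (hdist x)
    · have hsupp : support ((φ i).normed μ ⋆[.lsmul ℝ ℝ, μ] g) ⊆ closedBall 0 1 + tsupport g :=
        (support_convolution_subset _).trans <| Set.add_subset_add
          ((φ i).support_normed_eq.subset.trans <| ball_subset_closedBall.trans <|
            closedBall_subset_closedBall hi.le) (subset_tsupport g)
      rw [Set.indicator_of_notMem hx, notMem_support.1 fun h ↦ hx (hsupp h), norm_zero,
        zero_rpow hq.ne']
  · exact (ContDiffBump.convolution_tendsto_right_of_continuous hφ hg x).norm.rpow_const
      (.inr hq.le)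

end Mollification

section SobolevInequality

/-- The critical Sobolev exponent `2* = 2N / (N - 2)`, with the junk value `0` at `N = 2`. -/
noncomputable def sobolevExponent (N : ℕ) : ℝ := 2 * (N : ℝ) / ((N : ℝ) - 2)

variable {N : ℕ}

lemma sobolevExponent_mul_sub_two (hN : 3 ≤ N) : sobolevExponent N * (N - 2) = 2 * N :=
  have : (3 : ℝ) ≤ N := mod_cast hN
  div_mul_cancel₀ _ (by linarith)

lemma sobolevExponent_pos (hN : 3 ≤ N) : 0 < sobolevExponent N := by
  have : (3 : ℝ) ≤ N := mod_cast hN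
  exact div_pos (by linarith) (by linarith)

lemma lt_sub_two_mul_sobolevExponent (hN : 3 ≤ N) : (N : ℝ) < (N - 2) * sobolevExponent N := by
  have : (3 : ℝ) ≤ N := mod_cast hN
  linarith [sobolevExponent_mul_sub_two hN]

lemma two_div_sobolevExponent (hN : 3 ≤ N) : 2 / sobolevExponent N = 1 - 2 / N := by
  have : (3 : ℝ) ≤ N := mod_cast hN
  have : (N : ℝ) - 2 ≠ 0 := by linarith
  rw [sobolevExponent]
  field_simp

lemma holderConjugate_sobolevExponent_div_two (hN : 3 ≤ N) :
    (sobolevExponent N / 2).HolderConjugate (N / 2) := by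
  have : (3 : ℝ) ≤ N := mod_cast hN
  have hp := sobolevExponent_pos hN
  refine ⟨?_, by positivity, by positivity⟩
  rw [inv_div, inv_div, two_div_sobolevExponent hN, inv_one, sub_add_cancel]

lemma sobolevConst_nonneg (N : ℕ) : 0 ≤ sobolevConst N := by
  refine Real.sInf_nonneg ?_
  rintro _ ⟨φ, -, -, -, rfl⟩
  positivity

lemma integral_abs_rpow_pos {X : Type*} [TopologicalSpace X] [MeasurableSpace X]
    {μ : Measure X} [μ.IsOpenPosMeasure] {f : X → ℝ} (hf : Continuous f) (hne : f ≠ 0)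
    {p : ℝ} (hp : 0 < p) (hfp : Integrable (fun x ↦ |f x| ^ p) μ) : 0 < ∫ x, |f x| ^ p ∂μ := by
  obtain ⟨x, hx⟩ := ne_iff.1 hne
  exact integral_pos_of_integrable_nonneg_nonzero (x := x)
    (hf.abs.rpow_const fun _ ↦ .inr hp.le) hfp (fun _ ↦ by positivity)
    (rpow_pos_of_pos (abs_pos.2 hx) p).ne'

lemma integrable_abs_rpow_of_hasCompactSupport {X : Type*} [TopologicalSpace X]
    [MeasurableSpace X] [OpensMeasurableSpace X] {μ : Measure X} [IsFiniteMeasureOnCompacts μ]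
    {f : X → ℝ} (hf : Continuous f) (hfc : HasCompactSupport f) {p : ℝ} (hp : 0 < p) :
    Integrable (fun x ↦ |f x| ^ p) μ :=
  (hf.abs.rpow_const fun _ ↦ .inr hp.le).integrable_of_hasCompactSupport <|
    hfc.comp_left (g := fun t ↦ |t| ^ p) (by simp [hp.ne'])

lemma sobolevConst_mul_le_of_contDiff_infty (hN : 3 ≤ N) {φ : EuclideanSpace ℝ (Fin N) → ℝ}
    (hφ : ContDiff ℝ ∞ φ) (hφc : HasCompactSupport φ) :
    sobolevConst N * (∫ x, |φ x| ^ sobolevExponent N) ^ (2 / sobolevExponent N) ≤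
      ∫ x, ‖∇ φ x‖ ^ 2 := by
  have hp := sobolevExponent_pos hN
  by_cases hne : φ = 0
  · rw [hne]
    simp only [Pi.zero_apply, abs_zero, zero_rpow hp.ne', integral_zero,
      zero_rpow (div_pos two_pos hp).ne', mul_zero]
    positivity
  · have hpos := integral_abs_rpow_pos (μ := volume) hφ.continuous hne hp
      (integrable_abs_rpow_of_hasCompactSupport hφ.continuous hφc hp)
    rw [← le_div_iff₀ (by positivity)]
    refine csInf_le ⟨0, ?_⟩ ⟨φ, hφ, hφc, hne, rfl⟩
    rintro _ ⟨ψ, -, -, -, rfl⟩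
    positivity

lemma sobolevConst_mul_le_of_contDiff_one (hN : 3 ≤ N) {w : EuclideanSpace ℝ (Fin N) → ℝ}
    (hw : ContDiff ℝ 1 w) (hwc : HasCompactSupport w) :
    sobolevConst N * (∫ x, |w x| ^ sobolevExponent N) ^ (2 / sobolevExponent N) ≤
      ∫ x, ‖∇ w x‖ ^ 2 := by
  have hp := sobolevExponent_pos hN
  let φ (n : ℕ) : ContDiffBump (0 : EuclideanSpace ℝ (Fin N)) :=
    ⟨1 / ((n : ℝ) + 1) / 2, 1 / ((n : ℝ) + 1), by positivity, half_lt_self (by positivity)⟩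
  have hφ : Tendsto (fun n ↦ (φ n).rOut) atTop (𝓝 0) := tendsto_one_div_add_atTop_nhds_zero_nat
  have h_lim := tendsto_integral_norm_normed_convolution_rpow (μ := volume) hφ hw.continuous hwc hp
  have h_grad_lim := tendsto_integral_norm_normed_convolution_rpow (μ := volume) hφ
    (hw.continuous_fderiv one_ne_zero) (hwc.fderiv ℝ) two_pos
  simp only [← fderiv_normed_convolution _ hw hwc, ← norm_gradient, rpow_two] at h_grad_lim
  exact le_of_tendsto_of_tendsto' ((h_lim.rpow_const (.inr (by positivity))).const_mul _)
    h_grad_lim fun n ↦ sobolevConst_mul_le_of_contDiff_infty hN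
      (contDiff_normed_convolution _ hw.continuous)
      ((φ n).hasCompactSupport_normed.convolution _ hwc)

end SobolevInequality

lemma integral_sq_mul_sq_le {X : Type*} [MeasurableSpace X] {μ : Measure X} {p q : ℝ}
    (hpq : (p / 2).HolderConjugate (q / 2)) {f g : X → ℝ} (hf : AEStronglyMeasurable f μ)
    (hg : AEStronglyMeasurable g μ) (hfp : Integrable (fun x ↦ |f x| ^ p) μ)
    (hgq : Integrable (fun x ↦ |g x| ^ q) μ) :
    ∫ x, f x ^ 2 * g x ^ 2 ∂μ ≤
      (∫ x, |f x| ^ p ∂μ) ^ (1 / (p / 2)) * (∫ x, |g x| ^ q ∂μ) ^ (1 / (q / 2)) := by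
  have h_rpow (a s : ℝ) : (a ^ 2) ^ (s / 2) = |a| ^ s := by
    rw [← sq_abs, ← rpow_natCast_mul (abs_nonneg a), Nat.cast_ofNat, mul_div_cancel₀ s two_ne_zero]
  have h_memLp {h : X → ℝ} {s : ℝ} (hs : 0 < s / 2) (hh : AEStronglyMeasurable h μ)
      (hhs : Integrable (fun x ↦ |h x| ^ s) μ) :
      MemLp (fun x ↦ h x ^ 2) (ENNReal.ofReal (s / 2)) μ := by
    rw [← integrable_norm_rpow_iff (hh.fun_pow 2)
      (ENNReal.ofReal_pos.2 hs).ne' ENNReal.ofReal_ne_top,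
      ENNReal.toReal_ofReal hs.le]
    simpa only [norm_pow, norm_eq_abs, h_rpow, abs_abs] using hhs
  simpa only [h_rpow] using integral_mul_le_Lp_mul_Lq_of_nonneg hpq
    (.of_forall fun x ↦ sq_nonneg (f x)) (.of_forall fun x ↦ sq_nonneg (g x))
    (h_memLp hpq.pos hf hfp) (h_memLp hpq.symm.pos hg hgq)

lemma norm_add_sq_le_add_inv_mul {F : Type*} [SeminormedAddCommGroup F] (a b : F) {ε : ℝ}
    (hε : 0 < ε) : ‖a + b‖ ^ 2 ≤ (1 + ε) * ‖a‖ ^ 2 + (1 + ε⁻¹) * ‖b‖ ^ 2 := by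
  have h_amgm : 2 * ‖a‖ * ‖b‖ ≤ ε * ‖a‖ ^ 2 + ε⁻¹ * ‖b‖ ^ 2 := by
    have h_sq := mul_nonneg (inv_pos.2 hε).le (sq_nonneg (ε * ‖a‖ - ‖b‖))
    have h_expand : ε⁻¹ * (ε * ‖a‖ - ‖b‖) ^ 2 =
        ε * ‖a‖ ^ 2 + ε⁻¹ * ‖b‖ ^ 2 - 2 * ‖a‖ * ‖b‖ := by field_simp; ring
    linarith
  calc ‖a + b‖ ^ 2 ≤ (‖a‖ + ‖b‖) ^ 2 := by gcongr; exact norm_add_le a b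
    _ ≤ _ := by linarith [add_sq ‖a‖ ‖b‖]

section Cutoff

variable {E : Type*} [NormedAddCommGroup E] [InnerProductSpace ℝ E] {R : ℝ} {x : E}

/-- A smooth cutoff at scale `R`, equal to `1` on the ball of radius `R` and to `0` outside the ball
of radius `2 * R`. It is a dilate of one fixed bump function, so that its gradient scales with
`R`. -/
noncomputable def cutoff (R : ℝ) (x : E) : ℝ :=
  (⟨1, 2, one_pos, one_lt_two⟩ : ContDiffBump (0 : E)) (R⁻¹ • x)

lemma cutoff_nonneg : 0 ≤ cutoff R x := ContDiffBump.nonneg _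

lemma cutoff_le_one : cutoff R x ≤ 1 := ContDiffBump.le_one _

lemma contDiff_cutoff (R : ℝ) {n : ℕ∞} : ContDiff ℝ n (cutoff R : E → ℝ) :=
  (ContDiffBump.contDiff _).comp (contDiff_const_smul _)

lemma cutoff_eq_one (hx : ‖x‖ ≤ R) : cutoff R x = 1 := by
  refine ContDiffBump.one_of_mem_closedBall _ ?_
  have hR : 0 ≤ R := (norm_nonneg x).trans hx
  simpa [norm_smul, abs_of_nonneg hR] using inv_mul_le_one_of_le₀ hx hR

lemma eventually_cutoff_eq_one (x : E) : ∀ᶠ R in atTop, cutoff R x = 1 :=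
  (eventually_ge_atTop ‖x‖).mono fun _ ↦ cutoff_eq_one

lemma cutoff_eventuallyEq_one (hx : ‖x‖ < R) : cutoff R =ᶠ[𝓝 x] fun _ ↦ 1 :=
  (continuous_norm.continuousAt.eventually_lt_const hx).mono fun _ hy ↦ cutoff_eq_one hy.le

variable [FiniteDimensional ℝ E]

lemma hasCompactSupport_cutoff (hR : R ≠ 0) : HasCompactSupport (cutoff R : E → ℝ) :=
  (ContDiffBump.hasCompactSupport _).comp_smul (inv_ne_zero hR)

lemma gradient_cutoff_eq_zero (hx : ‖x‖ < R) : ∇ (cutoff R) x = 0 := by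
  rw [(cutoff_eventuallyEq_one hx).gradient_eq, gradient_fun_const]

lemma gradient_cutoff (R : ℝ) (x : E) : ∇ (cutoff R) x = R⁻¹ • ∇ (cutoff 1) (R⁻¹ • x) := by
  rw [← gradient_comp_smul]
  simp only [cutoff, inv_one, one_smul]
  rfl

lemma norm_gradient_cutoff_mul_sq_le {v : E → ℝ} (hv : ContDiff ℝ 1 v) (R : ℝ) {ε : ℝ}
    (hε : 0 < ε) (x : E) :
    ‖∇ (fun y ↦ cutoff R y * v y) x‖ ^ 2 ≤
      (1 + ε) * ‖∇ v x‖ ^ 2 + (1 + ε⁻¹) * (v x ^ 2 * ‖∇ (cutoff R) x‖ ^ 2) := by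
  rw [gradient_mul ((contDiff_cutoff R (n := 1)).differentiable one_ne_zero x)
    (hv.differentiable one_ne_zero x)]
  refine (norm_add_sq_le_add_inv_mul _ _ hε).trans ?_
  rw [norm_smul, norm_smul, mul_pow, mul_pow, norm_of_nonneg cutoff_nonneg, norm_eq_abs, sq_abs]
  gcongr
  exact mul_le_of_le_one_left (sq_nonneg _) (pow_le_one₀ cutoff_nonneg cutoff_le_one)

variable [MeasurableSpace E] [BorelSpace E] {μ : Measure E} [μ.IsAddHaarMeasure]

lemma integral_norm_gradient_cutoff_rpow_finrank (hR : 0 < R) :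
    ∫ x : E, ‖∇ (cutoff R) x‖ ^ (Module.finrank ℝ E : ℝ) ∂μ =
      ∫ x : E, ‖∇ (cutoff 1) x‖ ^ (Module.finrank ℝ E : ℝ) ∂μ := by
  simp_rw [rpow_natCast, gradient_cutoff R, norm_smul, mul_pow]
  rw [integral_const_mul,
    Measure.integral_comp_smul μ (fun y : E ↦ ‖∇ (cutoff 1) y‖ ^ Module.finrank ℝ E)]
  simp [abs_of_pos hR, hR.ne']

lemma integral_sq_mul_norm_gradient_cutoff_sq_le {p : ℝ}
    (hp : (p / 2).HolderConjugate (Module.finrank ℝ E / 2)) {u : E → ℝ}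
    (hu : AEStronglyMeasurable u μ) (hup : Integrable (fun x ↦ |u x| ^ p) μ) (hR : 0 < R) :
    ∫ x, u x ^ 2 * ‖∇ (cutoff R) x‖ ^ 2 ∂μ ≤ (∫ x in (ball 0 R)ᶜ, |u x| ^ p ∂μ) ^ (1 / (p / 2)) *
      (∫ x : E, ‖∇ (cutoff 1) x‖ ^ (Module.finrank ℝ E : ℝ) ∂μ) ^
        (1 / ((Module.finrank ℝ E : ℝ) / 2)) := by
  have h_cont := (continuous_gradient (contDiff_cutoff (E := E) R (n := 1))).norm
  have h_dim : (0 : ℝ) < Module.finrank ℝ E := by linarith [hp.symm.pos]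
  have h_int := integrable_abs_rpow_of_hasCompactSupport (μ := μ) h_cont
    (hasCompactSupport_gradient (hasCompactSupport_cutoff (E := E) hR.ne')).norm h_dim
  have h_holder := integral_sq_mul_sq_le hp hu.restrict h_cont.aestronglyMeasurable.restrict
    (hup.restrict (s := (ball 0 R)ᶜ)) h_int.restrict
  have h_vanish : ∀ x ∉ (ball (0 : E) R)ᶜ, u x ^ 2 * ‖∇ (cutoff R) x‖ ^ 2 = 0 := fun x hx ↦ by
    simp [gradient_cutoff_eq_zero (show ‖x‖ < R by simpa using hx)]
  simp only [abs_norm] at h_int h_holder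
  rw [setIntegral_eq_integral_of_forall_compl_eq_zero h_vanish] at h_holder
  refine h_holder.trans ?_
  rw [← integral_norm_gradient_cutoff_rpow_finrank hR]
  gcongr ?_ * ?_ ^ (_ : ℝ)
  exact setIntegral_le_integral h_int (.of_forall fun _ ↦ by positivity)

lemma tendsto_integral_sq_mul_norm_gradient_cutoff_sq {p : ℝ}
    (hp : (p / 2).HolderConjugate (Module.finrank ℝ E / 2)) {u : E → ℝ}
    (hu : AEStronglyMeasurable u μ) (hup : Integrable (fun x ↦ |u x| ^ p) μ) :
    Tendsto (fun R ↦ ∫ x, u x ^ 2 * ‖∇ (cutoff R) x‖ ^ 2 ∂μ) atTop (𝓝 0) := by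
  have h_tail : Tendsto (fun R : ℝ ↦ ∫ x in (ball 0 R)ᶜ, |u x| ^ p ∂μ) atTop (𝓝 0) := by
    have h_inter : ⋂ R : ℝ, (ball (0 : E) R)ᶜ = ∅ :=
      Set.eq_empty_of_forall_notMem fun x hx ↦ by simpa using Set.mem_iInter.1 hx (‖x‖ + 1)
    simpa [h_inter] using tendsto_setIntegral_of_antitone
      (fun R : ℝ ↦ (measurableSet_ball (x := (0 : E)) (ε := R)).compl)
      (fun _ _ h ↦ Set.compl_subset_compl.2 (ball_subset_ball h)) ⟨0, hup.integrableOn⟩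
  have h_bound := (h_tail.rpow_const (.inr (one_div_pos.2 hp.pos).le)).mul_const
    ((∫ x : E, ‖∇ (cutoff 1) x‖ ^ (Module.finrank ℝ E : ℝ) ∂μ) ^
      (1 / ((Module.finrank ℝ E : ℝ) / 2)))
  rw [zero_rpow (one_div_pos.2 hp.pos).ne', zero_mul] at h_bound
  refine squeeze_zero' (.of_forall fun R ↦ integral_nonneg fun x ↦ by positivity) ?_ h_bound
  exact (eventually_gt_atTop 0).mono fun R hR ↦
    integral_sq_mul_norm_gradient_cutoff_sq_le hp hu hup hR

end Cutoff

section DirichletEnergy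

variable {E : Type*} [NormedAddCommGroup E] [InnerProductSpace ℝ E] [FiniteDimensional ℝ E]
  [MeasurableSpace E] [BorelSpace E] {μ : Measure E} [μ.IsAddHaarMeasure] {f w v : E → ℝ}

lemma integral_mul_fderiv_eq_neg_of_hasCompactSupport (hf : ContDiff ℝ 1 f) (hw : ContDiff ℝ 1 w)
    (hwc : HasCompactSupport w) (e : E) :
    ∫ x, f x * fderiv ℝ w x e ∂μ = -∫ x, fderiv ℝ f x e * w x ∂μ := by
  have h_deriv {g : E → ℝ} (hg : ContDiff ℝ 1 g) : Continuous fun x ↦ fderiv ℝ g x e :=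
    (hg.continuous_fderiv one_ne_zero).clm_apply continuous_const
  exact integral_mul_fderiv_eq_neg_fderiv_mul_of_integrable
    (((h_deriv hf).mul hw.continuous).integrable_of_hasCompactSupport hwc.mul_left)
    ((hf.continuous.mul (h_deriv hw)).integrable_of_hasCompactSupport
      (hwc.fderiv_apply ℝ e).mul_left)
    ((hf.continuous.mul hw.continuous).integrable_of_hasCompactSupport hwc.mul_left)
    (fun x _ ↦ hf.differentiable one_ne_zero x) (fun x _ ↦ hw.differentiable one_ne_zero x)

lemma integral_inner_gradient (hv : ContDiff ℝ 2 v) (hw : ContDiff ℝ 1 w)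
    (hwc : HasCompactSupport w) :
    ∫ x, inner ℝ (∇ v x) (∇ w x) ∂μ = ∫ x, -(Δ v) x * w x ∂μ := by
  have hv' : ContDiff ℝ 1 (fderiv ℝ v) := hv.fderiv_right (by norm_num)
  let b := stdOrthonormalBasis ℝ E
  have h_partial (i) : ContDiff ℝ 1 fun x ↦ fderiv ℝ v x (b i) := hv'.clm_apply contDiff_const
  have h_second (x i) : fderiv ℝ (fun y ↦ fderiv ℝ v y (b i)) x (b i) =
      iteratedFDeriv ℝ 2 v x ![b i, b i] := by
    rw [fderiv_clm_apply (hv'.differentiable one_ne_zero x) (differentiableAt_const _)]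
    simp [iteratedFDeriv_two_apply]
  have h_inner (x) : inner ℝ (∇ v x) (∇ w x) = ∑ i, fderiv ℝ v x (b i) * fderiv ℝ w x (b i) := by
    rw [← b.sum_inner_mul_inner]
    simp only [inner_gradient_left, inner_gradient_right, RCLike.conj_to_real]
  have h_laplacian (x) : -(Δ v) x * w x =
      ∑ i, -(fderiv ℝ (fun y ↦ fderiv ℝ v y (b i)) x (b i) * w x) := by
    rw [laplacian_eq_iteratedFDeriv_orthonormalBasis v b]
    simp [h_second, Finset.sum_mul]
  simp_rw [h_inner, h_laplacian]
  rw [integral_finsetSum, integral_finsetSum]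
  · simp_rw [integral_neg, integral_mul_fderiv_eq_neg_of_hasCompactSupport (h_partial _) hw hwc]
  · exact fun i _ ↦ ((((h_partial i).continuous_fderiv one_ne_zero).clm_apply
      continuous_const).mul hw.continuous).integrable_of_hasCompactSupport hwc.mul_left |>.neg
  · exact fun i _ ↦ ((h_partial i).continuous.mul ((hw.continuous_fderiv one_ne_zero).clm_apply
      continuous_const)).integrable_of_hasCompactSupport (hwc.fderiv_apply ℝ (b i)).mul_left

lemma integrable_mul_norm_gradient_sq (hf : Continuous f) (hw : ContDiff ℝ 1 w)
    (hwc : HasCompactSupport w) : Integrable (fun x ↦ f x * ‖∇ w x‖ ^ 2) μ := by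
  have h_supp : HasCompactSupport fun x ↦ f x * ‖∇ w x‖ ^ 2 :=
    (hasCompactSupport_gradient hwc).mono fun x hx h ↦ hx (by simp [h])
  exact (hf.mul ((continuous_gradient hw).norm.pow 2)).integrable_of_hasCompactSupport h_supp

lemma integral_norm_gradient_mul_sq (hv : ContDiff ℝ 2 v) (hf : ContDiff ℝ 1 f)
    (hfc : HasCompactSupport f) :
    ∫ x, ‖∇ (fun y ↦ f y * v y) x‖ ^ 2 ∂μ =
      ∫ x, -(Δ v) x * (f x * (f x * v x)) ∂μ + ∫ x, v x ^ 2 * ‖∇ f x‖ ^ 2 ∂μ := by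
  have hv1 : ContDiff ℝ 1 v := hv.of_le one_le_two
  have hffv : ContDiff ℝ 1 fun x ↦ f x * (f x * v x) := hf.mul (hf.mul hv1)
  have hffvc : HasCompactSupport fun x ↦ f x * (f x * v x) := hfc.mul_right
  rw [← integral_inner_gradient hv hffv hffvc, ← integral_add]
  · exact integral_congr_ae <| .of_forall fun x ↦
      norm_gradient_mul_sq (hf.differentiable one_ne_zero x) (hv1.differentiable one_ne_zero x)
  · refine ((continuous_gradient hv1).inner
      (continuous_gradient hffv)).integrable_of_hasCompactSupport
      ((hasCompactSupport_gradient hffvc).mono fun x hx h ↦ hx ?_)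
    simp only [h, inner_zero_right]
  · exact integrable_mul_norm_gradient_sq (hv.continuous.pow 2) hf hfc

variable {p : ℝ}

lemma tendsto_integral_norm_gradient_cutoff_mul_sq
    (hp : (p / 2).HolderConjugate (Module.finrank ℝ E / 2)) (hv : ContDiff ℝ 2 v)
    (hvp : Integrable (fun x ↦ |v x| ^ p) μ) (hΔ : Integrable (fun x ↦ -(Δ v) x * v x) μ) :
    Tendsto (fun R ↦ ∫ x, ‖∇ (fun y ↦ cutoff R y * v y) x‖ ^ 2 ∂μ) atTop
      (𝓝 (∫ x, -(Δ v) x * v x ∂μ)) := by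
  have h_main : Tendsto (fun R ↦ ∫ x, -(Δ v) x * (cutoff R x * (cutoff R x * v x)) ∂μ) atTop
      (𝓝 (∫ x, -(Δ v) x * v x ∂μ)) := by
    have h_comm (R x) : -(Δ v) x * (cutoff R x * (cutoff R x * v x)) =
        cutoff R x ^ 2 * (-(Δ v) x * v x) := by ring
    simp_rw [h_comm]
    refine tendsto_integral_filter_of_dominated_convergence _ (.of_forall fun R ↦ ?_)
      (.of_forall fun R ↦ .of_forall fun x ↦ ?_) hΔ.norm (.of_forall fun x ↦ ?_)
    · exact ((contDiff_cutoff R (n := 0)).continuous.pow 2).aestronglyMeasurable.mul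
        hΔ.aestronglyMeasurable
    · rw [norm_mul, norm_pow, norm_of_nonneg cutoff_nonneg]
      exact mul_le_of_le_one_left (norm_nonneg _) (pow_le_one₀ cutoff_nonneg cutoff_le_one)
    · refine tendsto_const_nhds.congr' ((eventually_cutoff_eq_one x).mono fun R hR ↦ ?_)
      simp only [hR, one_pow, one_mul]
  have h_error := tendsto_integral_sq_mul_norm_gradient_cutoff_sq hp
    (hv.continuous.aestronglyMeasurable (μ := μ)) hvp
  have h_sum := h_main.add h_error
  rw [add_zero] at h_sum
  refine h_sum.congr' ((eventually_gt_atTop 0).mono fun R hR ↦ ?_)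
  exact (integral_norm_gradient_mul_sq hv (contDiff_cutoff R (n := 1))
    (hasCompactSupport_cutoff hR.ne')).symm

lemma integrable_norm_gradient_cutoff_mul_sq (hv : ContDiff ℝ 1 v) {R : ℝ} (hR : 0 < R) :
    Integrable (fun x ↦ ‖∇ (fun y ↦ cutoff R y * v y) x‖ ^ 2) μ := by
  simpa only [one_mul] using integrable_mul_norm_gradient_sq (μ := μ) (continuous_const (y := 1))
    ((contDiff_cutoff R (n := 1)).mul hv) (hasCompactSupport_cutoff (E := E) hR.ne').mul_right

lemma integrable_norm_gradient_sq
    (hp : (p / 2).HolderConjugate (Module.finrank ℝ E / 2)) (hv : ContDiff ℝ 2 v)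
    (hvp : Integrable (fun x ↦ |v x| ^ p) μ) (hΔ : Integrable (fun x ↦ -(Δ v) x * v x) μ) :
    Integrable (fun x ↦ ‖∇ v x‖ ^ 2) μ := by
  have hv1 : ContDiff ℝ 1 v := hv.of_le one_le_two
  have h_bdd := (tendsto_integral_norm_gradient_cutoff_mul_sq hp hv hvp
    hΔ).eventually_le_const (lt_add_one _)
  refine (aecover_ball (x := (0 : E)) tendsto_id).integrable_of_integral_bounded_of_nonneg_ae
    (l := atTop) (∫ x, -(Δ v) x * v x ∂μ + 1) (fun R ↦ ?_) (.of_forall fun x ↦ by positivity) ?_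
  · exact ((continuous_gradient hv1).norm.pow 2).locallyIntegrable.integrableOn_isCompact
      (isCompact_closedBall 0 R) |>.mono_set ball_subset_closedBall
  filter_upwards [h_bdd, eventually_gt_atTop 0] with R hR hR0
  refine le_trans ?_ hR
  have h_eq : ∀ x ∈ ball (0 : E) R, ‖∇ v x‖ ^ 2 = ‖∇ (fun y ↦ cutoff R y * v y) x‖ ^ 2 := by
    intro x hx
    have h_one : (fun y ↦ cutoff R y * v y) =ᶠ[𝓝 x] v :=
      (cutoff_eventuallyEq_one (mem_ball_zero_iff.1 hx)).mono fun y hy ↦ by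
        simp only [hy, one_mul]
    rw [h_one.gradient_eq]
  rw [id, setIntegral_congr_fun measurableSet_ball h_eq]
  exact setIntegral_le_integral (integrable_norm_gradient_cutoff_mul_sq hv1 hR0)
    (.of_forall fun x ↦ by positivity)

lemma integral_neg_laplacian_mul_self_le
    (hp : (p / 2).HolderConjugate (Module.finrank ℝ E / 2)) (hv : ContDiff ℝ 2 v)
    (hvp : Integrable (fun x ↦ |v x| ^ p) μ) (hΔ : Integrable (fun x ↦ -(Δ v) x * v x) μ) :
    ∫ x, -(Δ v) x * v x ∂μ ≤ ∫ x, ‖∇ v x‖ ^ 2 ∂μ := by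
  have hv1 : ContDiff ℝ 1 v := hv.of_le one_le_two
  have h_grad := integrable_norm_gradient_sq hp hv hvp hΔ
  have h_eps (ε : ℝ) (hε : 0 < ε) :
      ∫ x, -(Δ v) x * v x ∂μ ≤ (1 + ε) * ∫ x, ‖∇ v x‖ ^ 2 ∂μ := by
    have h_error := ((tendsto_integral_sq_mul_norm_gradient_cutoff_sq hp
      hv.continuous.aestronglyMeasurable hvp).const_mul (1 + ε⁻¹)).const_add
      ((1 + ε) * ∫ x, ‖∇ v x‖ ^ 2 ∂μ)
    rw [mul_zero, add_zero] at h_error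
    refine le_of_tendsto_of_tendsto (tendsto_integral_norm_gradient_cutoff_mul_sq hp hv hvp hΔ)
      h_error ((eventually_gt_atTop 0).mono fun R hR ↦ ?_)
    have h_int : Integrable (fun x ↦ v x ^ 2 * ‖∇ (cutoff R) x‖ ^ 2) μ :=
      integrable_mul_norm_gradient_sq (hv.continuous.pow 2) (contDiff_cutoff R (n := 1))
        (hasCompactSupport_cutoff hR.ne')
    simp only [← integral_const_mul]
    rw [← integral_add (h_grad.const_mul _) (h_int.const_mul _)]
    exact integral_mono (integrable_norm_gradient_cutoff_mul_sq hv1 hR)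
      ((h_grad.const_mul _).add (h_int.const_mul _))
      (norm_gradient_cutoff_mul_sq_le hv1 R hε)
  have h_lim : Tendsto (fun ε : ℝ ↦ (1 + ε) * ∫ x, ‖∇ v x‖ ^ 2 ∂μ) (𝓝[>] 0)
      (𝓝 (∫ x, ‖∇ v x‖ ^ 2 ∂μ)) := by
    refine (Continuous.tendsto' ?_ 0 _ ?_).mono_left nhdsWithin_le_nhds
    · fun_prop
    · rw [add_zero, one_mul]
  exact ge_of_tendsto h_lim (eventually_mem_nhdsWithin.mono h_eps)

end DirichletEnergy

section CriticalEquation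

lemma integrable_abs_rpow_of_le_one_add_norm_rpow {E : Type*} [NormedAddCommGroup E]
    [NormedSpace ℝ E] [FiniteDimensional ℝ E] [MeasurableSpace E] [BorelSpace E] {μ : Measure E}
    [μ.IsAddHaarMeasure] {f : E → ℝ} (hf : AEStronglyMeasurable f μ) {C r p : ℝ} (hp : 0 < p)
    (hrp : Module.finrank ℝ E < r * p) (h_decay : ∀ x, |f x| ≤ C * (1 + ‖x‖) ^ (-r)) :
    Integrable (fun x ↦ |f x| ^ p) μ := by
  have hC : 0 ≤ C := by simpa using (abs_nonneg _).trans (h_decay 0)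
  refine ((integrable_one_add_norm hrp).const_mul (C ^ p)).mono'
    (hf.aemeasurable.abs.pow_const p).aestronglyMeasurable (.of_forall fun x ↦ ?_)
  rw [norm_of_nonneg (by positivity)]
  calc |f x| ^ p ≤ (C * (1 + ‖x‖) ^ (-r)) ^ p := by gcongr; exact h_decay x
    _ = C ^ p * (1 + ‖x‖) ^ (-(r * p)) := by
      rw [mul_rpow hC (by positivity), ← rpow_mul (by positivity), neg_mul]

lemma abs_rpow_sub_two_mul_mul_self {p : ℝ} (hp : p ≠ 0) (a : ℝ) :
    |a| ^ (p - 2) * a * a = |a| ^ p := by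
  obtain rfl | ha := eq_or_ne a 0
  · simp [zero_rpow hp]
  · rw [mul_assoc, ← abs_mul_abs_self, ← sq, ← rpow_add_natCast (abs_ne_zero.2 ha)]
    norm_num

lemma rpow_half_le_of_mul_rpow_le {S B d : ℝ} (hS : 0 ≤ S) (hB : 0 < B) (hd : 0 < d)
    (h : S * B ^ (1 - 2 / d) ≤ B) : S ^ (d / 2) ≤ B := by
  have h_base : S ≤ B ^ (2 / d) := by
    rw [← le_div_iff₀ (by positivity)] at h
    refine h.trans_eq ?_
    nth_rw 1 [← rpow_one B]
    rw [← rpow_sub hB, sub_sub_cancel]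
  calc S ^ (d / 2) ≤ (B ^ (2 / d)) ^ (d / 2) := by gcongr
    _ = B := by rw [← rpow_mul hB.le, div_mul_div_cancel₀' two_ne_zero, div_self hd.ne', rpow_one]

variable {N : ℕ}

lemma lap_eq_laplacian (v : EuclideanSpace ℝ (Fin N) → ℝ) : lap v = Δ v := by
  ext x
  simp [lap, laplacian_eq_iteratedFDeriv_orthonormalBasis v (EuclideanSpace.basisFun (Fin N) ℝ)]

lemma sobolevConst_mul_le_integral_neg_laplacian_mul_self (hN : 3 ≤ N)
    {v : EuclideanSpace ℝ (Fin N) → ℝ} (hv : ContDiff ℝ 2 v)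
    (hvp : Integrable fun x ↦ |v x| ^ sobolevExponent N)
    (hΔ : Integrable fun x ↦ -(Δ v) x * v x) :
    sobolevConst N * (∫ x, |v x| ^ sobolevExponent N) ^ (2 / sobolevExponent N) ≤
      ∫ x, -(Δ v) x * v x := by
  have hp := sobolevExponent_pos hN
  have hw (R : ℝ) : ContDiff ℝ 1 fun x ↦ cutoff R x * v x :=
    (contDiff_cutoff R (n := 1)).mul (hv.of_le one_le_two)
  have h_lim : Tendsto (fun R ↦ ∫ x, |cutoff R x * v x| ^ sobolevExponent N) atTop
      (𝓝 (∫ x, |v x| ^ sobolevExponent N)) := by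
    refine tendsto_integral_filter_of_dominated_convergence _ (.of_forall fun R ↦ ?_)
      (.of_forall fun R ↦ .of_forall fun x ↦ ?_) hvp (.of_forall fun x ↦ ?_)
    · exact ((hw R).continuous.abs.rpow_const fun _ ↦ .inr hp.le).aestronglyMeasurable
    · rw [norm_of_nonneg (by positivity), abs_mul, abs_of_nonneg cutoff_nonneg]
      refine rpow_le_rpow (mul_nonneg cutoff_nonneg (abs_nonneg _)) ?_ hp.le
      exact mul_le_of_le_one_left (abs_nonneg _) cutoff_le_one
    · refine tendsto_const_nhds.congr' ((eventually_cutoff_eq_one x).mono fun R hR ↦ ?_)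
      simp only [hR, one_mul]
  refine le_of_tendsto_of_tendsto ((h_lim.rpow_const (.inr (by positivity))).const_mul _)
    (tendsto_integral_norm_gradient_cutoff_mul_sq ?_ hv hvp hΔ)
    ((eventually_gt_atTop 0).mono fun R hR ↦ sobolevConst_mul_le_of_contDiff_one hN (hw R)
      (hasCompactSupport_cutoff hR.ne').mul_right)
  simpa using holderConjugate_sobolevExponent_div_two hN

end CriticalEquation

theorem energy_quantization_general {N : ℕ} (hN : 3 ≤ N)
    (v : EuclideanSpace ℝ (Fin N) → ℝ) (hv : ContDiff ℝ 2 v) (hvne : v ≠ 0)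
    (heq : ∀ x, -lap v x = |v x| ^ (sobolevExponent N - 2) * v x)
    (hvp : Integrable fun x ↦ |v x| ^ sobolevExponent N) :
    sobolevConst N ^ ((N : ℝ) / 2) ≤ ∫ x, ‖∇ v x‖ ^ 2 := by
  have hp := sobolevExponent_pos hN
  have h_nonlin : (fun x ↦ -(Δ v) x * v x) = fun x ↦ |v x| ^ sobolevExponent N := by
    ext x
    rw [← lap_eq_laplacian, heq, abs_rpow_sub_two_mul_mul_self hp.ne']
  have hΔ : Integrable fun x ↦ -(Δ v) x * v x := h_nonlin ▸ hvp
  have h_energy := integral_neg_laplacian_mul_self_le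
    (by simpa using holderConjugate_sobolevExponent_div_two hN) hv hvp hΔ
  have h_sobolev := sobolevConst_mul_le_integral_neg_laplacian_mul_self hN hv hvp hΔ
  rw [h_nonlin] at h_energy h_sobolev
  rw [two_div_sobolevExponent hN] at h_sobolev
  exact (rpow_half_le_of_mul_rpow_le (sobolevConst_nonneg N)
    (integral_abs_rpow_pos hv.continuous hvne hp hvp) (by positivity) h_sobolev).trans h_energy

theorem energy_quantization {N : ℕ} (hN : 3 ≤ N)
    (v : EuclideanSpace ℝ (Fin N) → ℝ) (hv : ContDiff ℝ 2 v) (hvne : v ≠ 0)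
    (heq : ∀ x, -lap v x = |v x| ^ (2 * (N : ℝ) / ((N : ℝ) - 2) - 2) * v x)
    (C : ℝ) (hC : 0 < C)
    (hdecay : ∀ x, |v x| ≤ C * (1 + ‖x‖) ^ (-((N : ℝ) - 2)))
    (hgrad_decay : ∀ x, ‖gradient v x‖ ≤ C * (1 + ‖x‖) ^ (-((N : ℝ) - 1))) :
    sobolevConst N ^ ((N : ℝ) / 2) ≤ ∫ x, ‖gradient v x‖ ^ 2 :=
  energy_quantization_general hN v hv hvne heq <|
    integrable_abs_rpow_of_le_one_add_norm_rpow hv.continuous.aestronglyMeasurable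
      (sobolevExponent_pos hN) (by simpa using lt_sub_two_mul_sobolevExponent hN) hdecay
end
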